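/- Let A = kQ/I be a gentle algebra. Then the global dimension of A equals the maximum of the lengths of the forbidden threads of A (where this maximum is infinite if some forbidden thread has infinite length, which happens exactly when there is an oriented cycle with full relations). -/

import Mathlib

open MulOpposite DirectSum

set_option autoImplicit false

/-- The combinatorial data of a finite quiver together with a set of
length-two relations (`rel a b` means that the length-two path `a·b` lies in
the admissible ideal `I`). -/
structure GentleData : Type 1 where
  V : Type
  A : Type
  [fintypeV : Fintype V]
  [fintypeA : Fintype A]
  [decEqV : DecidableEq V]
  [decEqA : DecidableEq A]
  src : A → V
  tgt : A → V
  rel : A → A → Prop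

attribute [instance] GentleData.fintypeV GentleData.fintypeA GentleData.decEqV GentleData.decEqA

/-- The gentleness conditions on a bound quiver `(Q, I)`:
relations are composable length-two paths; at most two arrows start
(resp. end) at every vertex; for every arrow `β` there is at most one arrow `α`
with `αβ ∉ I` and at most one with `αβ ∈ I`, and dually; and there is a bound
on the length of paths avoiding relations (admissibility). -/
def IsGentle (Q : GentleData) : Prop :=
  (∀ a b, Q.rel a b → Q.tgt a = Q.src b) ∧
  (∀ v : Q.V, Set.ncard {a : Q.A | Q.src a = v} ≤ 2) ∧
  (∀ v : Q.V, Set.ncard {a : Q.A | Q.tgt a = v} ≤ 2) ∧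
  (∀ b : Q.A, Set.ncard {a : Q.A | Q.tgt a = Q.src b ∧ ¬ Q.rel a b} ≤ 1) ∧
  (∀ b : Q.A, Set.ncard {a : Q.A | Q.tgt a = Q.src b ∧ Q.rel a b} ≤ 1) ∧
  (∀ a : Q.A, Set.ncard {b : Q.A | Q.src b = Q.tgt a ∧ ¬ Q.rel a b} ≤ 1) ∧
  (∀ a : Q.A, Set.ncard {b : Q.A | Q.src b = Q.tgt a ∧ Q.rel a b} ≤ 1) ∧
  (∃ N : ℕ, ∀ p : ℕ → Q.A, ¬ ∀ i, i < N → (Q.tgt (p i) = Q.src (p (i+1)) ∧ ¬ Q.rel (p i) (p (i+1))))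

/-- Generators of the path algebra: one generator for each vertex (the
corresponding trivial path) and one for each arrow. -/
inductive GenSym (Q : GentleData) : Type
  | vertex : Q.V → GenSym Q
  | arrow : Q.A → GenSym Q

/-- The defining relations of the algebra `kQ/I`: the trivial paths are
orthogonal idempotents summing to `1`, arrows are compatible with the trivial
paths at their source and target, and the chosen length-two paths vanish. -/
inductive GentleRel (k : Type) [Field k] (Q : GentleData) :
    FreeAlgebra k (GenSym Q) → FreeAlgebra k (GenSym Q) → Prop
  | idem (v : Q.V) : GentleRel k Q
      (FreeAlgebra.ι k (GenSym.vertex v) * FreeAlgebra.ι k (GenSym.vertex v))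
      (FreeAlgebra.ι k (GenSym.vertex v))
  | orth (v w : Q.V) (h : v ≠ w) : GentleRel k Q
      (FreeAlgebra.ι k (GenSym.vertex v) * FreeAlgebra.ι k (GenSym.vertex w)) 0
  | sum_idem : GentleRel k Q (∑ v : Q.V, FreeAlgebra.ι k (GenSym.vertex v)) 1
  | src_mul (a : Q.A) : GentleRel k Q
      (FreeAlgebra.ι k (GenSym.vertex (Q.src a)) * FreeAlgebra.ι k (GenSym.arrow a))
      (FreeAlgebra.ι k (GenSym.arrow a))
  | mul_tgt (a : Q.A) : GentleRel k Q
      (FreeAlgebra.ι k (GenSym.arrow a) * FreeAlgebra.ι k (GenSym.vertex (Q.tgt a)))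
      (FreeAlgebra.ι k (GenSym.arrow a))
  | relation (a b : Q.A) (h : Q.rel a b) : GentleRel k Q
      (FreeAlgebra.ι k (GenSym.arrow a) * FreeAlgebra.ι k (GenSym.arrow b)) 0

/-- The algebra `A = kQ/I` presented by the bound quiver `Q`. -/
abbrev GentleAlgebra (k : Type) [Field k] (Q : GentleData) : Type :=
  RingQuot (GentleRel k Q)

/-- The image in `kQ/I` of a generator. -/
noncomputable def ofGen (k : Type) [Field k] (Q : GentleData) (x : GenSym Q) :
    GentleAlgebra k Q :=
  RingQuot.mkAlgHom k (GentleRel k Q) (FreeAlgebra.ι k x)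

/-- The idempotent `e_v ∈ kQ/I` of a vertex `v`. -/
noncomputable def idemOf (k : Type) [Field k] (Q : GentleData) (v : Q.V) :
    GentleAlgebra k Q :=
  ofGen k Q (GenSym.vertex v)

/-- The element of `kQ/I` given by an arrow `a`. -/
noncomputable def arrOf (k : Type) [Field k] (Q : GentleData) (a : Q.A) :
    GentleAlgebra k Q :=
  ofGen k Q (GenSym.arrow a)

/-- The indecomposable projective right module `e_v A`, as a right submodule
(i.e. `Aᵐᵒᵖ`-submodule) of `A`. -/
noncomputable def vertexModule (k : Type) [Field k] (Q : GentleData) (v : Q.V) :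
    Submodule (GentleAlgebra k Q)ᵐᵒᵖ (GentleAlgebra k Q) :=
  Submodule.span (GentleAlgebra k Q)ᵐᵒᵖ {idemOf k Q v}

/-- The right module `αA` generated by an arrow `α`, as a right submodule of `A`. -/
noncomputable def arrowModule (k : Type) [Field k] (Q : GentleData) (a : Q.A) :
    Submodule (GentleAlgebra k Q)ᵐᵒᵖ (GentleAlgebra k Q) :=
  Submodule.span (GentleAlgebra k Q)ᵐᵒᵖ {arrOf k Q a}

/-- An oriented cycle `c` of length `ℓ` with full relations:
`t(cᵢ) = s(cᵢ₊₁)` and `cᵢ cᵢ₊₁ ∈ I` for all `i` (indices modulo `ℓ`). -/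
def IsOCFCycle (Q : GentleData) {ℓ : ℕ} (c : ZMod ℓ → Q.A) : Prop :=
  ∀ i : ZMod ℓ, Q.tgt (c i) = Q.src (c (i + 1)) ∧ Q.rel (c i) (c (i + 1))

/-- The arrow `a` lies on some oriented cycle with full relations. -/
def OnOCFCycle (Q : GentleData) (a : Q.A) : Prop :=
  ∃ ℓ : ℕ, 1 ≤ ℓ ∧ ∃ c : ZMod ℓ → Q.A, IsOCFCycle Q c ∧ ∃ i : ZMod ℓ, c i = a

/-- The whole quiver `(Q, I)` is an oriented cycle of some length `ℓ ≥ 1` with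
full relations. -/
def QuiverIsOCF (Q : GentleData) : Prop :=
  ∃ ℓ : ℕ, 1 ≤ ℓ ∧ ∃ (e : Q.V ≃ ZMod ℓ) (f : Q.A ≃ ZMod ℓ),
    (∀ a, e (Q.src a) = f a) ∧ (∀ a, e (Q.tgt a) = f a + 1) ∧
    (∀ a b, Q.rel a b ↔ f b = f a + 1)

/-- The quiver `(Q, I)` is a single point: exactly one vertex and no arrows. -/
def QuiverIsPoint (Q : GentleData) : Prop :=
  (∃ v : Q.V, ∀ w : Q.V, w = v) ∧ IsEmpty Q.A

/-- `v` is a common vertex of two distinct oriented cycles with full relations. -/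
def TwoCyclesAt (Q : GentleData) (v : Q.V) : Prop :=
  ∃ (ℓ ℓ' : ℕ), 1 ≤ ℓ ∧ 1 ≤ ℓ' ∧ ∃ (c : ZMod ℓ → Q.A) (c' : ZMod ℓ' → Q.A),
    IsOCFCycle Q c ∧ IsOCFCycle Q c' ∧ Function.Injective c ∧ Function.Injective c' ∧
    (∃ i, Q.tgt (c i) = v) ∧ (∃ j, Q.tgt (c' j) = v) ∧ Set.range c ≠ Set.range c'

/-- The set of vertices lying on an oriented cycle with full relations. -/
def ocfVertexSet (Q : GentleData) : Set Q.V :=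
  {v | ∃ a : Q.A, OnOCFCycle Q a ∧ Q.tgt a = v}

/-- Oriented cycles with full relations, identified up to cyclic rotation. -/
def ocfCycleSetoid (Q : GentleData) (ℓ : ℕ) :
    Setoid {c : ZMod ℓ → Q.A // IsOCFCycle Q c ∧ Function.Injective c} where
  r c c' := ∃ t : ZMod ℓ, ∀ i, c'.1 i = c.1 (i + t)
  iseqv := by
    refine ⟨fun c => ⟨0, fun i => by rw [add_zero]⟩, ?_, ?_⟩
    · rintro c c' ⟨t, ht⟩
      exact ⟨-t, fun i => by rw [ht (i + -t), neg_add_cancel_right]⟩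
    · rintro a b c ⟨t, ht⟩ ⟨s, hs⟩
      exact ⟨s + t, fun i => by rw [hs i, ht (i + s), add_assoc]⟩

/-- `AGzero Q ℓ` is the value `φ_A(0, ℓ)` of the AG-invariant: the number of
oriented cycles of length `ℓ` with full relations, counted up to rotation. -/
noncomputable def AGzero (Q : GentleData) (ℓ : ℕ) : ℕ :=
  Nat.card (Quotient (ocfCycleSetoid Q ℓ))

/-- A (nontrivial) forbidden path with arrows `p 0, …, p (m-1)`:
all consecutive length-two subpaths lie in `I`. -/
def IsForbiddenPath (Q : GentleData) (m : ℕ) (p : ℕ → Q.A) : Prop :=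
  ∀ i : ℕ, i + 1 < m → Q.tgt (p i) = Q.src (p (i + 1)) ∧ Q.rel (p i) (p (i + 1))

/-- A (nontrivial) forbidden thread: a maximal forbidden path (of `m ≥ 1`
arrows), i.e. one which cannot be extended on either side. -/
def IsForbiddenThread (Q : GentleData) (m : ℕ) (p : ℕ → Q.A) : Prop :=
  1 ≤ m ∧ IsForbiddenPath Q m p ∧
  (∀ b : Q.A, Q.tgt b = Q.src (p 0) → ¬ Q.rel b (p 0)) ∧
  (∀ b : Q.A, Q.src b = Q.tgt (p (m - 1)) → ¬ Q.rel (p (m - 1)) b)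

/-- A trivial forbidden thread at a vertex `v` (of length `0`). -/
def IsTrivialForbiddenThread (Q : GentleData) (v : Q.V) : Prop :=
  ({a : Q.A | Q.tgt a = v} = ∅) ∨ ({a : Q.A | Q.src a = v} = ∅) ∨
  (∃ b b' : Q.A, {a : Q.A | Q.tgt a = v} = {b} ∧ {a : Q.A | Q.src a = v} = {b'} ∧ ¬ Q.rel b b')

/-- The set of lengths of the forbidden threads of finite length. -/
def finiteForbiddenThreadLengths (Q : GentleData) : Set ℕ∞ :=
  {n : ℕ∞ | (n = 0 ∧ ∃ v : Q.V, IsTrivialForbiddenThread Q v) ∨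
    (∃ m : ℕ, n = (m : ℕ∞) ∧ ∃ p : ℕ → Q.A, IsForbiddenThread Q m p)}

/-- The set of lengths of all forbidden threads; an oriented cycle with full
relations gives rise to a forbidden thread of infinite length. -/
def forbiddenThreadLengths (Q : GentleData) : Set ℕ∞ :=
  finiteForbiddenThreadLengths Q ∪
    {n : ℕ∞ | n = ⊤ ∧ ∃ ℓ : ℕ, 1 ≤ ℓ ∧ ∃ c : ZMod ℓ → Q.A, IsOCFCycle Q c}

section Dimensions

/-- `projDimLE R n M` : the `R`-module `M` admits a projective resolution of
length at most `n`. -/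
def projDimLE (R : Type) [Ring R] (n : ℕ) (M : Type) [AddCommGroup M] [Module R M] : Prop :=
  ∃ (P : ℕ → ModuleCat.{0} R) (d : ∀ i : ℕ, ↥(P (i + 1)) →ₗ[R] ↥(P i)) (ε : ↥(P 0) →ₗ[R] M),
    (∀ i, Module.Projective R ↥(P i)) ∧
    Function.Surjective ε ∧ Function.Exact (d 0) ε ∧
    (∀ i, Function.Exact (d (i + 1)) (d i)) ∧
    (∀ i, n ≤ i → Subsingleton ↥(P (i + 1)))

/-- `injDimLE R n M` : the `R`-module `M` admits an injective coresolution of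
length at most `n`. -/
def injDimLE (R : Type) [Ring R] (n : ℕ) (M : Type) [AddCommGroup M] [Module R M] : Prop :=
  ∃ (E : ℕ → ModuleCat.{0} R) (d : ∀ i : ℕ, ↥(E i) →ₗ[R] ↥(E (i + 1))) (ι : M →ₗ[R] ↥(E 0)),
    (∀ i, Module.Injective R ↥(E i)) ∧
    Function.Injective ι ∧ Function.Exact ι (d 0) ∧
    (∀ i, Function.Exact (d i) (d (i + 1))) ∧
    (∀ i, n ≤ i → Subsingleton ↥(E (i + 1)))

/-- The projective dimension of a module, in `ℕ∞`. -/
noncomputable def projDim (R : Type) [Ring R] (M : Type) [AddCommGroup M] [Module R M] : ℕ∞ :=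
  sInf {n : ℕ∞ | ∃ m : ℕ, n = (m : ℕ∞) ∧ projDimLE R m M}

/-- The injective dimension of a module, in `ℕ∞`. -/
noncomputable def injDim (R : Type) [Ring R] (M : Type) [AddCommGroup M] [Module R M] : ℕ∞ :=
  sInf {n : ℕ∞ | ∃ m : ℕ, n = (m : ℕ∞) ∧ injDimLE R m M}

/-- The global dimension of a ring: the supremum of the projective dimensions
of all finitely generated modules. -/
noncomputable def globalDim (R : Type) [Ring R] : ℕ∞ :=
  ⨆ (M : ModuleCat.{0} R) (_ : Module.Finite R ↥M), projDim R ↥M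

/-- The left self-injective dimension: the injective dimension of `R` as a
left module over itself. -/
noncomputable def leftSelfInjDim (R : Type) [Ring R] : ℕ∞ := injDim R R

/-- The right self-injective dimension: the injective dimension of `R` as a
right module over itself. -/
noncomputable def rightSelfInjDim (R : Type) [Ring R] : ℕ∞ := injDim Rᵐᵒᵖ R

end Dimensions

section Radical

/-- The radical of a module: the intersection of its maximal submodules. -/
def radMod (R : Type) [Ring R] (M : Type) [AddCommGroup M] [Module R M] : Submodule R M :=
  sInf {N : Submodule R M | IsCoatom N}

/-- The top of a module: the quotient by its radical. -/
abbrev topMod (R : Type) [Ring R] (M : Type) [AddCommGroup M] [Module R M] : Type :=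
  M ⧸ radMod R M

/-- The socle of a module: the sum of its simple submodules. -/
def socMod (R : Type) [Ring R] (M : Type) [AddCommGroup M] [Module R M] : Submodule R M :=
  sSup {N : Submodule R M | IsAtom N}

/-- The simple right `A`-module `S(v)` at a vertex `v`, realized as the top of
the indecomposable projective `e_v A`. -/
noncomputable abbrev SimpleAt (k : Type) [Field k] (Q : GentleData) (v : Q.V) : Type :=
  topMod (GentleAlgebra k Q)ᵐᵒᵖ ↥(vertexModule k Q v)

end Radical

section Gorenstein

/-- An indecomposable module: nontrivial, and admitting no nontrivial direct
sum decomposition. -/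
def IndecomposableModule (R : Type) [Ring R] (M : Type) [AddCommGroup M] [Module R M] : Prop :=
  Nontrivial M ∧ ∀ N N' : Submodule R M, IsCompl N N' → N = ⊥ ∨ N' = ⊥

/-- A Gorenstein projective module: a syzygy of an acyclic complex of
projective modules which remains acyclic after applying `Hom(−, R)`. -/
def IsGorensteinProjective (R : Type) [Ring R] (G : Type) [AddCommGroup G] [Module R G] :
    Prop :=
  ∃ (P : ℤ → ModuleCat.{0} R) (d : ∀ n : ℤ, ↥(P n) →ₗ[R] ↥(P (n + 1))),
    (∀ n, Module.Projective R ↥(P n)) ∧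
    (∀ n, Function.Exact (d n) (d (n + 1))) ∧
    (∀ n : ℤ, Function.Exact
      (fun g : ↥(P (n + 1 + 1)) →ₗ[R] R => g ∘ₗ d (n + 1))
      (fun g : ↥(P (n + 1)) →ₗ[R] R => g ∘ₗ d n)) ∧
    Nonempty (G ≃ₗ[R] ↥(LinearMap.range (d (-1))))

/-- An indecomposable non-projective Gorenstein projective module. -/
def IsIndecNonProjGP (R : Type) [Ring R] (M : Type) [AddCommGroup M] [Module R M] : Prop :=
  IndecomposableModule R M ∧ IsGorensteinProjective R M ∧ ¬ Module.Projective R M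

/-- An indecomposable Gorenstein projective module. -/
def IsIndecGP (R : Type) [Ring R] (M : Type) [AddCommGroup M] [Module R M] : Prop :=
  IndecomposableModule R M ∧ IsGorensteinProjective R M

/-- Indecomposable non-projective Gorenstein projective right `A`-modules
(realized as right submodules of `A`), up to isomorphism. -/
noncomputable def npgpSetoid (k : Type) [Field k] (Q : GentleData) :
    Setoid {N : Submodule (GentleAlgebra k Q)ᵐᵒᵖ (GentleAlgebra k Q) //
      IsIndecNonProjGP (GentleAlgebra k Q)ᵐᵒᵖ ↥N} where
  r N N' := Nonempty (↥N.1 ≃ₗ[(GentleAlgebra k Q)ᵐᵒᵖ] ↥N'.1)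
  iseqv := ⟨fun _ => ⟨LinearEquiv.refl _ _⟩, fun ⟨e⟩ => ⟨e.symm⟩, fun ⟨e⟩ ⟨f⟩ => ⟨e.trans f⟩⟩

/-- The number of isomorphism classes of indecomposable non-projective
Gorenstein projective right `A`-modules. -/
noncomputable def numIndecNonProjGP (k : Type) [Field k] (Q : GentleData) : ℕ :=
  Nat.card (Quotient (npgpSetoid k Q))

/-- Indecomposable Gorenstein projective right `A`-modules (realized as right
submodules of `A`), up to isomorphism. -/
noncomputable def gpSetoid (k : Type) [Field k] (Q : GentleData) :
    Setoid {N : Submodule (GentleAlgebra k Q)ᵐᵒᵖ (GentleAlgebra k Q) //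
      IsIndecGP (GentleAlgebra k Q)ᵐᵒᵖ ↥N} where
  r N N' := Nonempty (↥N.1 ≃ₗ[(GentleAlgebra k Q)ᵐᵒᵖ] ↥N'.1)
  iseqv := ⟨fun _ => ⟨LinearEquiv.refl _ _⟩, fun ⟨e⟩ => ⟨e.symm⟩, fun ⟨e⟩ ⟨f⟩ => ⟨e.trans f⟩⟩

end Gorenstein

section Strings

/-- A walk in the quiver: `len` letters, the `i`-th letter (for `1 ≤ i ≤ len`)
joining the vertex `vtx (i-1)` to `vtx i`; a letter `(a, true)` is the arrow
`a` read forwards (direct), and `(a, false)` is its formal inverse. -/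
structure StrWalk (Q : GentleData) : Type where
  len : ℕ
  vtx : ℕ → Q.V
  letter : ℕ → Q.A × Bool

/-- The walk is a string: letters join consecutive vertices, the walk is
reduced (no `a a⁻` nor `a⁻ a`), and it avoids the relations. -/
def IsString (Q : GentleData) (w : StrWalk Q) : Prop :=
  (∀ i : ℕ, 1 ≤ i → i ≤ w.len →
    ((w.letter i).2 = true →
      Q.src (w.letter i).1 = w.vtx (i - 1) ∧ Q.tgt (w.letter i).1 = w.vtx i) ∧
    ((w.letter i).2 = false →
      Q.tgt (w.letter i).1 = w.vtx (i - 1) ∧ Q.src (w.letter i).1 = w.vtx i)) ∧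
  (∀ i : ℕ, 1 ≤ i → i + 1 ≤ w.len →
    (¬ ((w.letter i).1 = (w.letter (i + 1)).1 ∧ (w.letter i).2 ≠ (w.letter (i + 1)).2)) ∧
    ((w.letter i).2 = true → (w.letter (i + 1)).2 = true →
      ¬ Q.rel (w.letter i).1 (w.letter (i + 1)).1) ∧
    ((w.letter i).2 = false → (w.letter (i + 1)).2 = false →
      ¬ Q.rel (w.letter (i + 1)).1 (w.letter i).1))

/-- `M` is the string module `M(w)` of the string `w`: it has a `k`-basis
indexed by the vertices `0, …, len` of the walk, the idempotent of a vertex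
fixes exactly the basis vectors sitting at that vertex, and an arrow moves
basis vectors along the corresponding letters of the walk. -/
def IsStringModule (k : Type) [Field k] (Q : GentleData) (w : StrWalk Q) (M : Type)
    [AddCommGroup M] [Module k M] [Module (GentleAlgebra k Q)ᵐᵒᵖ M] : Prop :=
  (∀ (c : k) (m : M), (algebraMap k (GentleAlgebra k Q)ᵐᵒᵖ c) • m = c • m) ∧
  ∃ b : ℕ → M,
    LinearIndependent k (fun i : Fin (w.len + 1) => b i) ∧
    Submodule.span k (b '' {i : ℕ | i ≤ w.len}) = ⊤ ∧
    (∀ i : ℕ, i ≤ w.len → ∀ v : Q.V,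
      (op (idemOf k Q v)) • b i = if w.vtx i = v then b i else 0) ∧
    (∀ i : ℕ, i ≤ w.len → ∀ a : Q.A,
      (op (arrOf k Q a)) • b i =
        (if i + 1 ≤ w.len ∧ w.letter (i + 1) = (a, true) then b (i + 1) else 0) +
        (if 1 ≤ i ∧ w.letter i = (a, false) then b (i - 1) else 0))

/-- The vertex at position `i` is a source of the walk: the adjacent letters
point away from it. -/
def sourceAt (Q : GentleData) (w : StrWalk Q) (i : ℕ) : Prop :=
  i ≤ w.len ∧ (i = 0 ∨ (w.letter i).2 = false) ∧ (i = w.len ∨ (w.letter (i + 1)).2 = true)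

/-- The vertex at position `i` is a sink of the walk: the adjacent letters
point towards it. -/
def sinkAt (Q : GentleData) (w : StrWalk Q) (i : ℕ) : Prop :=
  i ≤ w.len ∧ (i = 0 ∨ (w.letter i).2 = true) ∧ (i = w.len ∨ (w.letter (i + 1)).2 = false)

/-- Left maximality of the inverse prefix (letters `1, …, i`) of a walk of the
shape "inverse prefix followed by direct suffix": the underlying direct path
out of the vertex at position `i` cannot be prolonged (and, when the prefix is
trivial, no second arrow leaves the starting vertex). -/
def LeftMaxAt (Q : GentleData) (w : StrWalk Q) (i : ℕ) : Prop :=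
  if 1 ≤ i then ∀ α : Q.A, Q.src α = w.vtx 0 → Q.rel (w.letter 1).1 α
  else ∀ α : Q.A, Q.src α = w.vtx 0 → (1 ≤ w.len ∧ α = (w.letter 1).1)

/-- Right maximality of the direct suffix (letters `i+1, …, len`) of a walk of
the shape "inverse prefix followed by direct suffix". -/
def RightMaxAt (Q : GentleData) (w : StrWalk Q) (i : ℕ) : Prop :=
  if i < w.len then ∀ β : Q.A, Q.src β = w.vtx w.len → Q.rel (w.letter w.len).1 β
  else ∀ β : Q.A, Q.src β = w.vtx w.len → (1 ≤ w.len ∧ β = (w.letter w.len).1)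

end Strings

section HomPart
open CategoryTheory

/-- Projective dimension at most `n`, in the sense of Mathlib. -/
def PDLE (R : Type) [Ring R] (n : ℕ) (M : Type) [AddCommGroup M] [Module R M] : Prop :=
  HasProjectiveDimensionLE (ModuleCat.of R M) n

variable {R : Type} [Ring R] {M N P : Type} [AddCommGroup M] [Module R M]
  [AddCommGroup N] [Module R N] [AddCommGroup P] [Module R P]

theorem PDLE.equiv {n : ℕ} (e : M ≃ₗ[R] N) (h : PDLE R n M) : PDLE R n N := by
  unfold PDLE at *
  exact hasProjectiveDimensionLT_of_iso e.toModuleIso _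

theorem PDLE.mono {n m : ℕ} (hnm : n ≤ m) (h : PDLE R n M) : PDLE R m M := by
  unfold PDLE at *
  exact hasProjectiveDimensionLT_of_ge _ (n+1) (m+1) (by omega)

theorem PDLE.zero_iff : PDLE R 0 M ↔ Module.Projective R M := by
  unfold PDLE
  rw [← projective_iff_hasProjectiveDimensionLE_zero, ← IsProjective.iff_projective]

theorem PDLE.of_projective (n : ℕ) (h : Module.Projective R M) : PDLE R n M :=
  PDLE.mono (Nat.zero_le n) (PDLE.zero_iff.2 h)

/-- The short complex attached to an exact pair. -/
theorem shortExact_aux (f : M →ₗ[R] N) (g : N →ₗ[R] P) (hf : Function.Injective f)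
    (hg : Function.Surjective g) (hfg : Function.Exact f g) :
    ∃ w, (ShortComplex.mk (ModuleCat.ofHom f) (ModuleCat.ofHom g) w).ShortExact := by
  have w : ModuleCat.ofHom f ≫ ModuleCat.ofHom g = 0 := by
    ext x
    simpa using hfg.apply_apply_eq_zero x
  refine ⟨w, ?_⟩
  have h1 : (ShortComplex.mk (ModuleCat.ofHom f) (ModuleCat.ofHom g) w).Exact := by
    rw [ShortComplex.ShortExact.moduleCat_exact_iff_function_exact]
    exact hfg
  exact { exact := h1
          mono_f := (ModuleCat.mono_iff_injective _).2 hf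
          epi_g := (ModuleCat.epi_iff_surjective _).2 hg }

theorem PDLE.middle {n : ℕ} (f : M →ₗ[R] N) (g : N →ₗ[R] P) (hf : Function.Injective f)
    (hg : Function.Surjective g) (hfg : Function.Exact f g) (h1 : PDLE R n M) (h3 : PDLE R n P) :
    PDLE R n N := by
  obtain ⟨w, hw⟩ := shortExact_aux f g hf hg hfg
  exact hw.hasProjectiveDimensionLT_X₂ _ h1 h3

theorem PDLE.succ_iff {n : ℕ} (f : M →ₗ[R] N) (g : N →ₗ[R] P) (hf : Function.Injective f)
    (hg : Function.Surjective g) (hfg : Function.Exact f g) (h2 : Module.Projective R N) :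
    PDLE R (n+1) P ↔ PDLE R n M := by
  obtain ⟨w, hw⟩ := shortExact_aux f g hf hg hfg
  exact hw.hasProjectiveDimensionLT_X₃_iff n ((IsProjective.iff_projective N).1 h2)

theorem PDLE.ker_iff {n : ℕ} (g : N →ₗ[R] P)
    (hg : Function.Surjective g) (h2 : Module.Projective R N) :
    PDLE R (n+1) P ↔ PDLE R n (LinearMap.ker g) :=
  PDLE.succ_iff (LinearMap.ker g).subtype g (Submodule.subtype_injective _) hg
    (LinearMap.exact_subtype_ker_map g) h2

theorem PDLE.prod {n : ℕ} (h1 : PDLE R n M) (h2 : PDLE R n N) : PDLE R n (M × N) :=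
  PDLE.middle (LinearMap.inl R M N) (LinearMap.snd R M N) LinearMap.inl_injective
    LinearMap.snd_surjective Function.Exact.inl_snd h1 h2

theorem PDLE.of_projDimLE {n : ℕ} : ∀ {M : Type} [AddCommGroup M] [Module R M],
    projDimLE R n M → PDLE R n M := by
  induction n with
  | zero =>
    intro M _ _ ⟨P, d, ε, hP, hε, h0, hd, hs⟩
    have := hs 0 le_rfl
    rw [PDLE.zero_iff]
    have hinj : Function.Injective ε := by
      rw [injective_iff_map_eq_zero]
      intro y hy
      obtain ⟨z, rfl⟩ := (h0 y).1 hy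
      rw [Subsingleton.elim z 0, map_zero]
    have := hP 0
    exact Module.Projective.of_equiv (LinearEquiv.ofBijective ε ⟨hinj, hε⟩)
  | succ n ih =>
    intro M _ _ ⟨P, d, ε, hP, hε, h0, hd, hs⟩
    rw [PDLE.ker_iff ε hε (hP 0)]
    apply ih
    refine ⟨fun i => P (i+1), fun i => d (i+1),
      (d 0).codRestrict _ (fun c => h0.apply_apply_eq_zero c), fun i => hP _, ?_, ?_,
      fun i => hd _, fun i hi => hs _ (by omega)⟩
    · rintro ⟨y, hy⟩
      obtain ⟨z, rfl⟩ := (h0 y).1 hy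
      exact ⟨z, rfl⟩
    · intro y
      rw [← hd 0 y]
      exact Subtype.ext_iff

theorem PDLE.projDimLE {n : ℕ} : ∀ {M : Type} [AddCommGroup M] [Module R M],
    PDLE R n M → projDimLE R n M := by
  induction n with
  | zero =>
    intro M _ _ h
    rw [PDLE.zero_iff] at h
    refine ⟨fun | 0 => ModuleCat.of R M | _+1 => ModuleCat.of R PUnit, fun _ => 0,
      LinearMap.id, ?_, Function.surjective_id, ?_, ?_, ?_⟩
    · rintro (_|i)
      · exact h
      · exact (inferInstance : Module.Projective R PUnit)
    · intro y
      simp [eq_comm]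
    · intro i y
      have : y = 0 := Subsingleton.elim (α := PUnit) _ _
      simp [this]
    · intro i _
      exact (inferInstance : Subsingleton PUnit)
  | succ n ih =>
    intro M _ _ h
    let g : (M →₀ R) →ₗ[R] M := Finsupp.linearCombination R id
    have hg : Function.Surjective g := Finsupp.linearCombination_id_surjective R M
    rw [PDLE.ker_iff g hg inferInstance] at h
    obtain ⟨P, d, ε, hP, hε, h0, hd, hs⟩ := ih h
    refine ⟨fun | 0 => ModuleCat.of R (M →₀ R) | i+1 => P i,
      fun | 0 => (LinearMap.ker g).subtype ∘ₗ ε | i+1 => d i,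
      g, ?_, hg, ?_, ?_, ?_⟩
    · rintro (_|i)
      · exact (inferInstance : Module.Projective R (M →₀ R))
      · exact hP i
    · intro y
      constructor
      · intro hy
        obtain ⟨z, hz⟩ := hε ⟨y, hy⟩
        exact ⟨z, by simp [hz]⟩
      · rintro ⟨z, rfl⟩
        exact (ε z).2
    · rintro (_|i)
      · intro y
        rw [← h0 y]
        exact (Subtype.ext_iff (a1 := ε y) (a2 := 0)).symm
      · exact hd i
    · rintro (_|i) hi
      · omega
      · exact hs i (by omega)

theorem projDim_le_iff {n : ℕ} : projDim R M ≤ n ↔ PDLE R n M := by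
  constructor
  · intro h
    have hne : {n : ℕ∞ | ∃ m : ℕ, n = (m : ℕ∞) ∧ _root_.projDimLE R m M}.Nonempty := by
      by_contra hcon
      rw [Set.not_nonempty_iff_eq_empty] at hcon
      rw [projDim, hcon, sInf_empty] at h
      simp at h
    obtain ⟨m, hm, hm2⟩ := csInf_mem hne
    have : (m : ℕ∞) ≤ n := by rw [← hm]; exact h
    exact PDLE.mono (by exact_mod_cast this) (PDLE.of_projDimLE hm2)
  · intro h
    exact sInf_le ⟨n, rfl, h.projDimLE⟩

end HomPart

section PresPart

/-- A `k`-algebra `B` presented by the opposite of the bound quiver `Q`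
(so that left `B`-modules are right `kQ/I`-modules). -/
structure Pres (k : Type) [Field k] (Q : GentleData) (B : Type) [Ring B] [Algebra k B]
    (e : Q.V → B) (x : Q.A → B) : Prop where
  idem : ∀ v, e v * e v = e v
  orth : ∀ v w, v ≠ w → e v * e w = 0
  sum : ∑ v, e v = 1
  tgt : ∀ a, e (Q.tgt a) * x a = x a
  src : ∀ a, x a * e (Q.src a) = x a
  rel : ∀ a b, Q.rel a b → x b * x a = 0
  gen : ∀ T : Submodule k B, 1 ∈ T → (∀ v, ∀ y ∈ T, e v * y ∈ T) →
    (∀ a, ∀ y ∈ T, x a * y ∈ T) → ∀ y, y ∈ T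
  lift : ∀ (C : Type) [Ring C] [Algebra k C] (e' : Q.V → C) (x' : Q.A → C),
    (∀ v, e' v * e' v = e' v) → (∀ v w, v ≠ w → e' v * e' w = 0) → (∑ v, e' v = 1) →
    (∀ a, e' (Q.tgt a) * x' a = x' a) → (∀ a, x' a * e' (Q.src a) = x' a) →
    (∀ a b, Q.rel a b → x' b * x' a = 0) →
    ∃ f : B →ₐ[k] C, (∀ v, f (e v) = e' v) ∧ ∀ a, f (x a) = x' a

variable {k : Type} [Field k] {Q : GentleData} {B : Type} [Ring B] [Algebra k B]
    {e : Q.V → B} {x : Q.A → B}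

/-- The left annihilator of the arrow `a`. -/
def annIdeal {Q : GentleData} {B : Type} [Ring B] (e : Q.V → B) (x : Q.A → B) (a : Q.A) :
    Submodule B B :=
  Submodule.span B ({1 - e (Q.tgt a)} ∪ x '' {b | Q.rel a b})

theorem Pres.e_mul_e (h : Pres k Q B e x) (v w : Q.V) :
    e v * e w = if v = w then e v else 0 := by
  split_ifs with hvw
  · subst hvw; exact h.idem v
  · exact h.orth v w hvw

theorem Pres.e_mul_x (h : Pres k Q B e x) (v : Q.V) (a : Q.A) :
    e v * x a = if v = Q.tgt a then x a else 0 := by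
  rw [← h.tgt a, ← mul_assoc, h.e_mul_e]
  split_ifs with hv
  · rw [hv]
  · rw [zero_mul]

theorem Pres.x_mul_e (h : Pres k Q B e x) (v : Q.V) (a : Q.A) :
    x a * e v = if v = Q.src a then x a else 0 := by
  rw [← h.src a, mul_assoc, h.e_mul_e]
  split_ifs with hv hv' hv'
  · rfl
  · exact absurd hv.symm hv'
  · exact absurd hv'.symm hv
  · rw [mul_zero]

theorem Pres.x_mul_x (h : Pres k Q B e x) (a b : Q.A) (hab : Q.tgt a ≠ Q.src b) :
    x b * x a = 0 := by
  rw [← h.tgt a, ← mul_assoc, h.x_mul_e, if_neg hab, zero_mul]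

theorem Pres.mul_x_of_mem (h : Pres k Q B e x) (a : Q.A) (y : B) (hy : y ∈ annIdeal e x a) :
    y * x a = 0 := by
  unfold annIdeal at hy
  induction hy using Submodule.span_induction with
  | mem y hy =>
    rcases hy with hy | ⟨b, hb, rfl⟩
    · rw [Set.mem_singleton_iff.1 hy, sub_mul, one_mul, h.tgt, sub_self]
    · exact h.rel a b hb
  | zero => simp
  | add y z _ _ hy hz => rw [add_mul, hy, hz, add_zero]
  | smul c y _ hy => rw [smul_mul_assoc, hy, smul_zero]

theorem Pres.exists_fun (h : Pres k Q B e x) (a : Q.A) :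
    ∃ φ : B →ₗ[k] (B ⧸ annIdeal e x a),
      (∀ y, φ (y * x a) = Submodule.Quotient.mk y) ∧ ∀ c, c ≠ a → ∀ y, φ (y * x c) = 0 := by
  classical
  let M := B ⧸ annIdeal e x a
  let e' : Q.V → Module.End k (k × M) := fun v =>
    LinearMap.prodMap (if v = Q.src a then LinearMap.id else 0) (Algebra.lsmul k k M (e v))
  let x' : Q.A → Module.End k (k × M) := fun c =>
    LinearMap.inr k k M ∘ₗ LinearMap.coprod
      (if c = a then LinearMap.toSpanSingleton k M (Submodule.Quotient.mk 1) else 0)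
      (Algebra.lsmul k k M (x c))
  have he' : ∀ v r m, e' v (r, m) = (if v = Q.src a then r else 0, e v • m) := by
    intro v r m
    simp only [e', LinearMap.prodMap_apply]
    split_ifs <;> simp
  have hx' : ∀ c r m, x' c (r, m) =
      (0, (if c = a then r • (Submodule.Quotient.mk 1 : M) else 0) + x c • m) := by
    intro c r m
    simp only [x', LinearMap.comp_apply, LinearMap.coprod_apply, LinearMap.inr_apply]
    split_ifs <;> simp
  have hsm : ∀ (b : B) (r : k) (z : B), b • (r • (Submodule.Quotient.mk z : M)) =
      r • (Submodule.Quotient.mk (b * z) : M) := by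
    intro b r z
    rw [← Submodule.Quotient.mk_smul, ← Submodule.Quotient.mk_smul, ← Submodule.Quotient.mk_smul,
      smul_eq_mul, mul_smul_comm]
  obtain ⟨f, hfe, hfx⟩ := h.lift (Module.End k (k × M)) e' x'
    (by
      intro v
      apply LinearMap.ext
      rintro ⟨r, m⟩
      rw [Module.End.mul_apply, he', he', ← mul_smul, h.idem]
      split_ifs <;> rfl)
    (by
      intro v w hvw
      apply LinearMap.ext
      rintro ⟨r, m⟩
      rw [Module.End.mul_apply, he', he', ← mul_smul, h.orth v w hvw]
      split_ifs with h1 h2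
      · exact absurd (h1.trans h2.symm) hvw
      all_goals simp)
    (by
      apply LinearMap.ext
      rintro ⟨r, m⟩
      rw [LinearMap.sum_apply, Finset.sum_congr rfl (fun v _ => he' v r m), Prod.ext_iff,
        Prod.fst_sum, Prod.snd_sum, ← Finset.sum_smul, h.sum]
      simp)
    (by
      intro c
      apply LinearMap.ext
      rintro ⟨r, m⟩
      rw [Module.End.mul_apply, hx', he', smul_add, ← mul_smul, h.tgt]
      congr 1
      · simp
      · congr 1
        split_ifs with hc
        · subst hc
          rw [hsm]
          congr 1
          rw [Submodule.Quotient.eq]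
          have : (1 - e (Q.tgt c)) ∈ annIdeal e x c := Submodule.subset_span (Or.inl rfl)
          rw [← neg_mem_iff] at this
          simpa using this
        · simp)
    (by
      intro c
      apply LinearMap.ext
      rintro ⟨r, m⟩
      rw [Module.End.mul_apply, hx', he', hx', ← mul_smul, h.src]
      split_ifs with h1 h2
      · rfl
      · subst h1; exact absurd rfl h2
      · rfl)
    (by
      intro c d hcd
      apply LinearMap.ext
      rintro ⟨r, m⟩
      rw [Module.End.mul_apply, hx', hx', smul_add, ← mul_smul, h.rel c d hcd]
      split_ifs with hd hc hc
      · subst hc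
        rw [hsm]
        have : (Submodule.Quotient.mk (x d * 1) : M) = 0 := by
          rw [Submodule.Quotient.mk_eq_zero, mul_one]
          exact Submodule.subset_span (Or.inr ⟨d, hcd, rfl⟩)
        rw [this]
        simp
      · simp
      · subst hc
        rw [hsm]
        have : (Submodule.Quotient.mk (x d * 1) : M) = 0 := by
          rw [Submodule.Quotient.mk_eq_zero, mul_one]
          exact Submodule.subset_span (Or.inr ⟨d, hcd, rfl⟩)
        rw [this]
        simp
      · simp)
  have hact : ∀ (y : B) (m : M), f y (0, m) = (0, y • m) := by
    let T : Submodule k B :=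
      { carrier := {y | ∀ m : M, f y (0, m) = (0, y • m)}
        add_mem' := by
          intro y z hy hz m
          rw [map_add, LinearMap.add_apply, hy, hz, add_smul]
          simp
        zero_mem' := by intro m; simp; rfl
        smul_mem' := by
          intro c y hy m
          rw [map_smul, LinearMap.smul_apply, hy, smul_assoc]
          simp }
    refine h.gen T ?_ ?_ ?_
    · intro m; simp
    · intro v y hy m
      rw [map_mul, Module.End.mul_apply, hy, hfe, he', mul_smul]
      simp
    · intro v y hy m
      rw [map_mul, Module.End.mul_apply, hy, hfx, hx', mul_smul]
      simp
  refine ⟨LinearMap.snd k k M ∘ₗ LinearMap.applyₗ ((1 : k), (0 : M)) ∘ₗ f.toLinearMap, ?_, ?_⟩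
  · intro y
    simp only [LinearMap.comp_apply, AlgHom.toLinearMap_apply, LinearMap.applyₗ_apply_apply]
    rw [map_mul, Module.End.mul_apply, hfx, hx', hact]
    simp
    exact congrArg Submodule.Quotient.mk (mul_one y)
  · intro c hc y
    simp only [LinearMap.comp_apply, AlgHom.toLinearMap_apply, LinearMap.applyₗ_apply_apply]
    rw [map_mul, Module.End.mul_apply, hfx, hx', hact]
    simp [hc]

theorem Pres.mem_ann (h : Pres k Q B e x) (a : Q.A) (T : Set Q.A) (ha : a ∉ T) (y : B)
    (hy : y * x a ∈ Submodule.span B (x '' T)) : y ∈ annIdeal e x a := by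
  obtain ⟨φ, h1, h2⟩ := h.exists_fun a
  have : ∀ z ∈ Submodule.span B (x '' T), ∀ c : B, φ (c * z) = 0 := by
    intro z hz
    induction hz using Submodule.span_induction with
    | mem z hz =>
      obtain ⟨c, hc, rfl⟩ := hz
      exact h2 c (fun hca => ha (hca ▸ hc))
    | zero => simp
    | add y z _ _ hy hz => intro c; rw [mul_add, map_add, hy, hz, add_zero]
    | smul b y _ hy => intro c; rw [smul_eq_mul, ← mul_assoc, hy]
  have h3 := this _ hy 1
  rw [one_mul, h1, Submodule.Quotient.mk_eq_zero] at h3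
  exact h3

theorem Pres.mul_x_eq_zero_iff (h : Pres k Q B e x) (a : Q.A) (y : B) :
    y * x a = 0 ↔ y ∈ annIdeal e x a := by
  refine ⟨fun hy => h.mem_ann a ∅ (by simp) y (by rw [hy]; exact zero_mem _), h.mul_x_of_mem a y⟩

theorem Pres.exists_aug (h : Pres k Q B e x) (v : Q.V) :
    ∃ f : B →ₐ[k] k, (∀ w, f (e w) = if w = v then 1 else 0) ∧ ∀ a, f (x a) = 0 := by
  apply h.lift k (fun w => if w = v then 1 else 0) (fun _ => 0)
  · intro w; split_ifs <;> simp
  · intro w w' hw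
    split_ifs with h1 h2
    · exact absurd (h1.trans h2.symm) hw
    all_goals simp
  · simp
  · simp
  · simp
  · simp

theorem Pres.ne_mul (h : Pres k Q B e x) (b : Q.A) (y : B) : x b ≠ x b * y * x b := by
  intro hb
  have h1 : (1 - x b * y) * x b = 0 := by rw [sub_mul, one_mul, ← hb, sub_self]
  rw [h.mul_x_eq_zero_iff] at h1
  obtain ⟨f, hfe, hfx⟩ := h.exists_aug (Q.tgt b)
  have h2 : ∀ z ∈ annIdeal e x b, f z = 0 := by
    intro z hz
    unfold annIdeal at hz
    induction hz using Submodule.span_induction with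
    | mem z hz =>
      rcases hz with hz | ⟨c, hc, rfl⟩
      · rw [Set.mem_singleton_iff.1 hz, map_sub, map_one, hfe]; simp
      · exact hfx c
    | zero => simp
    | add y z _ _ hy hz => rw [map_add, hy, hz, add_zero]
    | smul b y _ hy => rw [smul_eq_mul, map_mul, hy, mul_zero]
  have h3 := h2 _ h1
  rw [map_sub, map_mul, hfx] at h3
  simp at h3

end PresPart

section ModPart

variable {k : Type} [Field k] {Q : GentleData} {B : Type} [Ring B] [Algebra k B]
    {e : Q.V → B} {x : Q.A → B}

theorem Pres.mem_E (h : Pres k Q B e x) (v : Q.V) (y : B) :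
    y ∈ Submodule.span B {e v} ↔ y * e v = y := by
  rw [Submodule.mem_span_singleton]
  constructor
  · rintro ⟨c, rfl⟩
    rw [smul_eq_mul, mul_assoc, h.idem]
  · intro hy
    exact ⟨y, hy⟩

theorem Pres.E_proj (h : Pres k Q B e x) (v : Q.V) :
    Module.Projective B (Submodule.span B {e v}) := by
  refine Module.Projective.of_split (Submodule.subtype _)
    ((LinearMap.toSpanSingleton B B (e v)).codRestrict _ ?_) ?_
  · intro c
    exact Submodule.mem_span_singleton.2 ⟨c, rfl⟩
  · apply LinearMap.ext
    rintro ⟨y, hy⟩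
    apply Subtype.ext
    exact (h.mem_E v y).1 hy

theorem Pres.K_mul_e (h : Pres k Q B e x) (v : Q.V) (S : Set Q.A) (hS : ∀ b ∈ S, Q.src b = v)
    (y : B) (hy : y ∈ Submodule.span B (x '' S)) : y * e v = y := by
  induction hy using Submodule.span_induction with
  | mem z hz =>
    obtain ⟨c, hc, rfl⟩ := hz
    rw [← hS c hc, h.src]
  | zero => simp
  | add y z _ _ hy hz => rw [add_mul, hy, hz]
  | smul b y _ hy => rw [smul_mul_assoc, hy]

theorem Pres.ker_iff (h : Pres k Q B e x) (hQ : IsGentle Q) (a : Q.A) (y : B)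
    (hy : y * e (Q.tgt a) = y) :
    y * x a = 0 ↔ y ∈ Submodule.span B (x '' {b | Q.rel a b}) := by
  rw [h.mul_x_eq_zero_iff, annIdeal, Submodule.span_union]
  constructor
  · intro hy2
    obtain ⟨z, hz, w, hw, rfl⟩ := Submodule.mem_sup.1 hy2
    obtain ⟨c, rfl⟩ := Submodule.mem_span_singleton.1 hz
    have hw' := h.K_mul_e (Q.tgt a) {b | Q.rel a b} (fun b hb => (hQ.1 a b hb).symm) w hw
    rw [add_mul, hw', smul_mul_assoc, sub_mul, one_mul, h.idem, sub_self, smul_zero,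
      zero_add] at hy
    rw [← hy]
    exact hw
  · intro hy
    exact Submodule.mem_sup_right hy

/-- right multiplication by the arrow `a`. -/
noncomputable def mulArrow {Q : GentleData} {B : Type} [Ring B] (e : Q.V → B) (x : Q.A → B)
    (a : Q.A) : Submodule.span B {e (Q.tgt a)} →ₗ[B] Submodule.span B {x a} :=
  ((LinearMap.toSpanSingleton B B (x a)).codRestrict _
    (fun c => Submodule.mem_span_singleton.2 ⟨c, rfl⟩)) ∘ₗ Submodule.subtype _

theorem mulArrow_apply (a : Q.A) (y : Submodule.span B {e (Q.tgt a)}) :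
    (mulArrow e x a y : B) = y * x a := rfl

theorem Pres.mulArrow_surj (h : Pres k Q B e x) (a : Q.A) :
    Function.Surjective (mulArrow e x a) := by
  rintro ⟨y, hy⟩
  obtain ⟨c, rfl⟩ := Submodule.mem_span_singleton.1 hy
  refine ⟨⟨c * e (Q.tgt a), Submodule.mem_span_singleton.2 ⟨c, rfl⟩⟩, ?_⟩
  apply Subtype.ext
  rw [mulArrow_apply]
  simp only [mul_assoc, h.tgt, smul_eq_mul]

theorem rel_unique (hQ : IsGentle Q) {a b c : Q.A} (h1 : Q.rel a b) (h2 : Q.rel a c) : b = c := by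
  have := hQ.2.2.2.2.2.2.1 a
  rw [Set.ncard_le_one_iff] at this
  exact this ⟨(hQ.1 _ _ h1).symm, h1⟩ ⟨(hQ.1 _ _ h2).symm, h2⟩

theorem Pres.pd_chain (h : Pres k Q B e x) (hQ : IsGentle Q) {a b : Q.A} (hab : Q.rel a b)
    (n : ℕ) : PDLE B (n+1) (Submodule.span B {x a}) ↔ PDLE B n (Submodule.span B {x b}) := by
  have hset : {c | Q.rel a c} = {b} := by
    ext c
    exact ⟨fun hc => rel_unique hQ hc hab, fun hc => by rw [Set.mem_singleton_iff.1 hc]; exact hab⟩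
  have hle : Submodule.span B {x b} ≤ Submodule.span B {e (Q.tgt a)} := by
    rw [Submodule.span_singleton_le_iff_mem, h.mem_E, hQ.1 a b hab, h.src]
  refine PDLE.succ_iff (Submodule.inclusion hle) (mulArrow e x a)
    (Submodule.inclusion_injective hle) (h.mulArrow_surj a) ?_ (h.E_proj _)
  rintro ⟨y, hy⟩
  have h1 := h.ker_iff hQ a y ((h.mem_E _ _).1 hy)
  rw [hset, Set.image_singleton] at h1
  rw [Subtype.ext_iff, mulArrow_apply]
  simp only [ZeroMemClass.coe_zero]
  rw [h1]
  constructor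
  · intro hy2
    exact ⟨⟨y, hy2⟩, rfl⟩
  · rintro ⟨z, hz⟩
    have hz' : (z : B) = y := Subtype.ext_iff.1 hz
    rw [← hz']
    exact z.2

theorem Pres.proj_of_no_rel (h : Pres k Q B e x) (hQ : IsGentle Q) {a : Q.A}
    (ha : ∀ b, ¬ Q.rel a b) : Module.Projective B (Submodule.span B {x a}) := by
  have hset : {c | Q.rel a c} = ∅ := by
    ext c
    simpa using ha c
  have := h.E_proj (Q.tgt a)
  refine Module.Projective.of_equiv (LinearEquiv.ofBijective (mulArrow e x a)
    ⟨?_, h.mulArrow_surj a⟩)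
  rw [injective_iff_map_eq_zero]
  rintro ⟨y, hy⟩ hy2
  have h1 := h.ker_iff hQ a y ((h.mem_E _ _).1 hy)
  rw [hset, Set.image_empty, Submodule.span_empty, Submodule.mem_bot] at h1
  apply Subtype.ext
  exact h1.1 (Subtype.ext_iff.1 hy2)

theorem Pres.not_proj_quot (h : Pres k Q B e x) (a : Q.A) :
    ¬ Module.Projective B (B ⧸ Submodule.span B {x a}) := by
  intro hp
  obtain ⟨s, hs⟩ := Module.projective_lifting_property (Submodule.mkQ (Submodule.span B {x a}))
    LinearMap.id (Submodule.mkQ_surjective _)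
  set u := s (Submodule.Quotient.mk 1) with hu
  have h1 : x a * u = 0 := by
    rw [hu, ← smul_eq_mul, ← map_smul, ← Submodule.Quotient.mk_smul, smul_eq_mul, mul_one,
      (Submodule.Quotient.mk_eq_zero _).2 (Submodule.mem_span_singleton_self _), map_zero]
  have h2 : 1 - u ∈ Submodule.span B {x a} := by
    rw [← Submodule.Quotient.eq]
    exact (LinearMap.congr_fun hs (Submodule.Quotient.mk 1)).symm
  obtain ⟨y, hy⟩ := Submodule.mem_span_singleton.1 h2
  apply h.ne_mul a y
  rw [mul_assoc, ← smul_eq_mul y, hy, mul_sub, h1, mul_one, sub_zero]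

theorem Pres.not_proj_arrow (h : Pres k Q B e x) (hQ : IsGentle Q) {a b : Q.A}
    (hab : Q.rel a b) : ¬ Module.Projective B (Submodule.span B {x a}) := by
  intro hp
  have hset : {c | Q.rel a c} = {b} := by
    ext c
    exact ⟨fun hc => rel_unique hQ hc hab, fun hc => by rw [Set.mem_singleton_iff.1 hc]; exact hab⟩
  obtain ⟨s, hs⟩ := Module.projective_lifting_property (mulArrow e x a)
    LinearMap.id (h.mulArrow_surj a)
  let xa : Submodule.span B {x a} := ⟨x a, Submodule.mem_span_singleton_self _⟩
  obtain ⟨u, hu⟩ : ∃ u : B, u = s xa := ⟨_, rfl⟩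
  have hue : u * e (Q.tgt a) = u := by rw [hu]; exact (h.mem_E _ _).1 (s xa).2
  have h1 : x b * u = 0 := by
    have h2 : x b • xa = 0 := Subtype.ext (h.rel a b hab)
    have h3 : x b • s xa = 0 := by rw [← map_smul, h2, map_zero]
    rw [hu]
    exact Subtype.ext_iff.1 h3
  have h2 : u * x a = x a := by
    have := Subtype.ext_iff.1 (LinearMap.congr_fun hs xa)
    rw [hu]
    exact this
  have h3 : e (Q.tgt a) - u ∈ Submodule.span B {x b} := by
    rw [← Set.image_singleton, ← hset, ← h.ker_iff hQ a _ (by rw [sub_mul, h.idem, hue]), sub_mul,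
      h2, h.tgt, sub_self]
  obtain ⟨y, hy⟩ := Submodule.mem_span_singleton.1 h3
  apply h.ne_mul b y
  rw [mul_assoc, ← smul_eq_mul y, hy, mul_sub, h1, sub_zero, hQ.1 a b hab, h.src]

theorem Pres.not_pd_arrow (h : Pres k Q B e x) (hQ : IsGentle Q) (m : ℕ) :
    ∀ p : ℕ → Q.A, IsForbiddenPath Q (m+2) p → ¬ PDLE B m (Submodule.span B {x (p 0)}) := by
  induction m with
  | zero =>
    intro p hp
    rw [PDLE.zero_iff]
    exact h.not_proj_arrow hQ (hp 0 (by omega)).2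
  | succ m ih =>
    intro p hp
    rw [h.pd_chain hQ (hp 0 (by omega)).2]
    exact ih (fun i => p (i+1)) (fun i hi => hp (i+1) (by omega))

theorem Pres.not_pd_quot (h : Pres k Q B e x) (hQ : IsGentle Q) (m : ℕ)
    (p : ℕ → Q.A) (hp : IsForbiddenPath Q (m+1) p) :
    ¬ PDLE B m (B ⧸ Submodule.span B {x (p 0)}) := by
  cases m with
  | zero =>
    rw [PDLE.zero_iff]
    exact h.not_proj_quot _
  | succ m =>
    rw [PDLE.succ_iff (Submodule.subtype (Submodule.span B {x (p 0)})) (Submodule.mkQ _)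
      (Submodule.subtype_injective _) (Submodule.mkQ_surjective _)
      (LinearMap.exact_subtype_mkQ _) inferInstance]
    exact h.not_pd_arrow hQ m p hp

theorem Pres.pd_arrow (h : Pres k Q B e x) (hQ : IsGentle Q) (n : ℕ) :
    ∀ a : Q.A, (∀ (m : ℕ) (p : ℕ → Q.A), IsForbiddenPath Q m p → p 0 = a → m ≤ n + 1) →
      PDLE B n (Submodule.span B {x a}) := by
  induction n with
  | zero =>
    intro a ha
    apply PDLE.of_projective
    apply h.proj_of_no_rel hQ
    intro b hab
    have := ha 2 (fun | 0 => a | _+1 => b) (by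
      intro i hi
      have : i = 0 := by omega
      subst this
      exact ⟨hQ.1 a b hab, hab⟩) rfl
    omega
  | succ n ih =>
    intro a ha
    by_cases hb : ∃ b, Q.rel a b
    · obtain ⟨b, hab⟩ := hb
      rw [h.pd_chain hQ hab]
      apply ih
      intro m p hp hpb
      have := ha (m+1) (fun | 0 => a | i+1 => p i) (by
        rintro (_|i) hi
        · simp only
          rw [hpb]
          exact ⟨hQ.1 a b hab, hab⟩
        · exact hp i (by omega)) rfl
      omega
    · push Not at hb
      exact PDLE.of_projective _ (h.proj_of_no_rel hQ hb)

theorem Pres.pd_K (h : Pres k Q B e x) (n : ℕ) (S : Finset Q.A)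
    (hS : ∀ a ∈ S, PDLE B n (Submodule.span B {x a})) :
    PDLE B n (Submodule.span B (x '' (S : Set Q.A))) := by
  induction S using Finset.induction_on with
  | empty =>
    apply PDLE.of_projective
    rw [Finset.coe_empty, Set.image_empty, Submodule.span_empty]
    infer_instance
  | insert a S ha ih =>
    have h1 := hS a (Finset.mem_insert_self _ _)
    have h2 := ih (fun b hb => hS b (Finset.mem_insert_of_mem hb))
    refine PDLE.equiv ?_ (PDLE.prod h1 h2)
    have hle1 : Submodule.span B {x a} ≤ Submodule.span B (x '' (insert a S : Finset Q.A)) := by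
      apply Submodule.span_mono
      rintro _ rfl
      exact ⟨a, by simp, rfl⟩
    have hle2 : Submodule.span B (x '' (S : Set Q.A)) ≤
        Submodule.span B (x '' (insert a S : Finset Q.A)) := by
      apply Submodule.span_mono
      apply Set.image_mono
      simp
    refine LinearEquiv.ofBijective
      (LinearMap.coprod (Submodule.inclusion hle1) (Submodule.inclusion hle2)) ⟨?_, ?_⟩
    · rw [injective_iff_map_eq_zero]
      rintro ⟨⟨y, hy⟩, ⟨z, hz⟩⟩ hyz
      have hyz' : y + z = 0 := Subtype.ext_iff.1 hyz
      obtain ⟨c, rfl⟩ := Submodule.mem_span_singleton.1 hy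
      have hc : c * x a ∈ Submodule.span B (x '' (S : Set Q.A)) := by
        rw [← smul_eq_mul, eq_neg_of_add_eq_zero_left hyz']
        exact neg_mem hz
      have hc0 : c • x a = 0 := h.mul_x_of_mem a c (h.mem_ann a S (by simpa using ha) c hc)
      rw [hc0, zero_add] at hyz'
      ext
      · exact hc0
      · exact hyz'
    · rintro ⟨y, hy⟩
      have hy' := hy
      rw [Finset.coe_insert, Set.image_insert_eq, Submodule.span_insert, Submodule.mem_sup] at hy'
      obtain ⟨u, hu, w, hw, rfl⟩ := hy'
      exact ⟨(⟨u, hu⟩, ⟨w, hw⟩), rfl⟩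

end ModPart

section UpperPart

variable {k : Type} [Field k] {Q : GentleData} {B : Type} [Ring B] [Algebra k B]
    {e : Q.V → B} {x : Q.A → B}

/-- words of length `n` in the arrows. -/
def wordSet {Q : GentleData} {B : Type} [Ring B] (e : Q.V → B) (x : Q.A → B) : ℕ → Set B
  | 0 => Set.range e
  | n+1 => Set.image2 (fun a w => x a * w) Set.univ (wordSet e x n)

theorem wordSet_finite (n : ℕ) : (wordSet e x n).Finite := by
  induction n with
  | zero => exact Set.finite_range e
  | succ n ih => exact Set.Finite.image2 _ Set.finite_univ ih

theorem Pres.e_mul_word (h : Pres k Q B e x) (n : ℕ) (w : B) (hw : w ∈ wordSet e x n) :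
    ∃ v, ∀ u, e u * w = if u = v then w else 0 := by
  cases n with
  | zero =>
    obtain ⟨v, rfl⟩ := hw
    refine ⟨v, fun u => ?_⟩
    rw [h.e_mul_e]
    split_ifs with huv
    · rw [huv]
    · rfl
  | succ n =>
    obtain ⟨a, _, w, _, rfl⟩ := hw
    refine ⟨Q.tgt a, fun u => ?_⟩
    simp only
    rw [← mul_assoc, h.e_mul_x]
    split_ifs <;> simp

theorem Pres.word_chain (h : Pres k Q B e x) (n : ℕ) : ∀ w ∈ wordSet e x (n+1), w ≠ 0 →
    ∃ p : ℕ → Q.A, (∀ i, i < n → (Q.tgt (p i) = Q.src (p (i+1)) ∧ ¬ Q.rel (p i) (p (i+1)))) ∧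
      ∃ w', w = x (p n) * w' := by
  induction n with
  | zero =>
    rintro _ ⟨a, _, w, _, rfl⟩ _
    exact ⟨fun _ => a, fun i hi => by omega, w, rfl⟩
  | succ n ih =>
    rintro _ ⟨a, _, w, hw, rfl⟩ hne
    simp only at hne
    obtain ⟨p, hp, w', rfl⟩ := ih w hw (by rintro rfl; exact hne (mul_zero _))
    have hxx : x a * x (p n) ≠ 0 := by
      intro h0
      apply hne
      rw [← mul_assoc, h0, zero_mul]
    refine ⟨fun i => if i ≤ n then p i else a, ?_, x (p n) * w', ?_⟩
    · intro i hi
      simp only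
      by_cases hin : i = n
      · subst hin
        rw [if_pos le_rfl, if_neg (by omega)]
        constructor
        · by_contra hcon
          exact hxx (h.x_mul_x _ _ hcon)
        · intro hr
          exact hxx (h.rel _ _ hr)
      · rw [if_pos (by omega), if_pos (by omega)]
        exact hp i (by omega)
    · simp

theorem Pres.exists_word_zero (h : Pres k Q B e x) (hQ : IsGentle Q) :
    ∃ N, ∀ w ∈ wordSet e x N, w = 0 := by
  obtain ⟨N, hN⟩ := hQ.2.2.2.2.2.2.2
  refine ⟨N+1, fun w hw => ?_⟩
  by_contra hne
  obtain ⟨p, hp, -⟩ := h.word_chain N w hw hne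
  exact hN p hp

theorem Pres.finite (h : Pres k Q B e x) (hQ : IsGentle Q) : Module.Finite k B := by
  obtain ⟨N, hN⟩ := h.exists_word_zero hQ
  have hfin : (⋃ n ∈ Finset.range (N+1), wordSet e x n).Finite :=
    Set.Finite.biUnion (Finset.finite_toSet _) (fun n _ => wordSet_finite n)
  refine Module.finite_def.2 ((Submodule.fg_def).2 ⟨_, hfin, ?_⟩)
  have hmem : ∀ n ≤ N, ∀ w ∈ wordSet e x n,
      w ∈ Submodule.span k (⋃ n ∈ Finset.range (N+1), wordSet e x n) := by
    intro n hn w hw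
    apply Submodule.subset_span
    simp only [Set.mem_iUnion]
    exact ⟨n, Finset.mem_range.2 (by omega), hw⟩
  rw [eq_top_iff]
  intro y _
  refine h.gen _ ?_ ?_ ?_ y
  · rw [← h.sum]
    exact Submodule.sum_mem _ (fun v _ => hmem 0 (Nat.zero_le _) _ ⟨v, rfl⟩)
  · intro v y hy
    induction hy using Submodule.span_induction with
    | mem w hw =>
      simp only [Set.mem_iUnion] at hw
      obtain ⟨n, hn, hw⟩ := hw
      obtain ⟨u, hu⟩ := h.e_mul_word n w hw
      rw [hu]
      split_ifs
      · exact hmem n (by simpa [Nat.lt_succ_iff] using hn) w hw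
      · exact zero_mem _
    | zero => rw [mul_zero]; exact zero_mem _
    | add y z _ _ hy hz => rw [mul_add]; exact add_mem hy hz
    | smul b y _ hy => rw [mul_smul_comm]; exact Submodule.smul_mem _ _ hy
  · intro a y hy
    induction hy using Submodule.span_induction with
    | mem w hw =>
      simp only [Set.mem_iUnion] at hw
      obtain ⟨n, hn, hw⟩ := hw
      have hn' : n ≤ N := by simpa [Nat.lt_succ_iff] using hn
      rcases Nat.lt_or_ge n N with hlt | hge
      · exact hmem (n+1) hlt _ ⟨a, trivial, w, hw, rfl⟩
      · have : n = N := by omega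
        subst this
        rw [hN w hw, mul_zero]
        exact zero_mem _
    | zero => rw [mul_zero]; exact zero_mem _
    | add y z _ _ hy hz => rw [mul_add]; exact add_mem hy hz
    | smul b y _ hy => rw [mul_smul_comm]; exact Submodule.smul_mem _ _ hy

theorem Pres.exists_socle (h : Pres k Q B e x) (hQ : IsGentle Q) (M : Type) [AddCommGroup M]
    [Module B M] [Nontrivial M] :
    ∃ (v : Q.V) (m : M), m ≠ 0 ∧ e v • m = m ∧ ∀ a, x a • m = 0 := by
  classical
  obtain ⟨N, hN⟩ := h.exists_word_zero hQ
  obtain ⟨y, hy⟩ := exists_ne (0 : M)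
  have hex : ∃ n, ∀ w ∈ wordSet e x n, w • y = 0 :=
    ⟨N, fun w hw => by rw [hN w hw, zero_smul]⟩
  have hfind := Nat.find_spec hex
  have hmin := fun m => Nat.find_min hex (m := m)
  generalize Nat.find hex = n at hfind hmin
  cases n with
  | zero =>
    exfalso
    apply hy
    rw [← one_smul B y, ← h.sum, Finset.sum_smul]
    exact Finset.sum_eq_zero (fun v _ => hfind _ ⟨v, rfl⟩)
  | succ n =>
    have := hmin n (Nat.lt_succ_self n)
    push Not at this
    obtain ⟨w, hw, hwy⟩ := this
    obtain ⟨v, hv⟩ := h.e_mul_word n w hw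
    refine ⟨v, w • y, hwy, ?_, fun a => ?_⟩
    · rw [← mul_smul, hv, if_pos rfl]
    · rw [← mul_smul]
      exact hfind _ ⟨a, trivial, w, hw, rfl⟩

theorem Pres.decomp (h : Pres k Q B e x) (v : Q.V) (y : B) :
    ∃ c : k, y * e v - c • e v ∈ Submodule.span B (x '' {a | Q.src a = v}) := by
  let T : Submodule k B :=
    { carrier := {y | ∃ c : k, y * e v - c • e v ∈ Submodule.span B (x '' {a | Q.src a = v})}
      add_mem' := by
        rintro y z ⟨c, hc⟩ ⟨d, hd⟩
        refine ⟨c + d, ?_⟩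
        have := add_mem hc hd
        rw [add_mul, add_smul]
        convert this using 1
        abel
      zero_mem' := ⟨0, by simp⟩
      smul_mem' := by
        rintro d y ⟨c, hc⟩
        refine ⟨d * c, ?_⟩
        have := Submodule.smul_mem _ (algebraMap k B d) hc
        rw [smul_mul_assoc, mul_smul, ← smul_sub]
        rwa [algebraMap_smul] at this }
  refine h.gen T ⟨1, by simp⟩ ?_ ?_ y
  · rintro w y ⟨c, hc⟩
    have := Submodule.smul_mem _ (e w) hc
    rw [smul_eq_mul, mul_sub, mul_smul_comm, ← mul_assoc, h.e_mul_e] at this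
    split_ifs at this with hwv
    · subst hwv
      exact ⟨c, this⟩
    · exact ⟨0, by simpa using this⟩
  · rintro a y ⟨c, hc⟩
    have := Submodule.smul_mem _ (x a) hc
    rw [smul_eq_mul, mul_sub, mul_smul_comm, ← mul_assoc, h.x_mul_e] at this
    refine ⟨0, ?_⟩
    split_ifs at this with hwv
    · have h2 : c • x a ∈ Submodule.span B (x '' {a | Q.src a = v}) := by
        rw [← algebraMap_smul B]
        exact Submodule.smul_mem _ _ (Submodule.subset_span ⟨a, hwv.symm, rfl⟩)
      simpa using add_mem this h2
    · simpa using this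

theorem Pres.pd_simple (h : Pres k Q B e x) (hQ : IsGentle Q) (n : ℕ)
    (hn : ∀ (m : ℕ) (p : ℕ → Q.A), 1 ≤ m → IsForbiddenPath Q m p → m ≤ n)
    (M : Type) [AddCommGroup M] [Module B M] [IsSimpleModule B M] : PDLE B n M := by
  classical
  have : Nontrivial M := IsSimpleModule.nontrivial B M
  obtain ⟨v, m, hm, hev, hxa⟩ := h.exists_socle hQ M
  let g : Submodule.span B {e v} →ₗ[B] M := LinearMap.toSpanSingleton B M m ∘ₗ Submodule.subtype _
  have hg : ∀ y, g y = (y : B) • m := fun y => rfl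
  have hgs : Function.Surjective g := by
    rcases LinearMap.surjective_or_eq_zero g with h1 | h1
    · exact h1
    · exfalso
      apply hm
      rw [← hev]
      have := LinearMap.congr_fun h1 ⟨e v, Submodule.mem_span_singleton_self _⟩
      exact this
  have hK0 : ∀ y ∈ Submodule.span B (x '' {a | Q.src a = v}), y • m = 0 := by
    intro y hy
    induction hy using Submodule.span_induction with
    | mem z hz =>
      obtain ⟨c, hc, rfl⟩ := hz
      exact hxa c
    | zero => simp
    | add y z _ _ hy hz => rw [add_smul, hy, hz, add_zero]
    | smul b y _ hy => rw [smul_assoc, hy, smul_zero]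
  have hker : ∀ y, y * e v = y → (y • m = 0 ↔ y ∈ Submodule.span B (x '' {a | Q.src a = v})) := by
    intro y hy
    refine ⟨fun hym => ?_, hK0 y⟩
    obtain ⟨c, hc⟩ := h.decomp v y
    rw [hy] at hc
    have h1 := hK0 _ hc
    rw [sub_smul, hym, zero_sub, neg_eq_zero, Algebra.smul_def, mul_smul, hev] at h1
    by_cases hc0 : c = 0
    · simpa [hc0] using hc
    · exfalso
      apply hm
      have h2 : algebraMap k B c⁻¹ • algebraMap k B c • m = 0 := by rw [h1, smul_zero]
      rwa [← mul_smul, ← map_mul, inv_mul_cancel₀ hc0, map_one, one_smul] at h2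
  have hle : Submodule.span B (x '' {a | Q.src a = v}) ≤ Submodule.span B {e v} := by
    intro y hy
    rw [h.mem_E]
    exact h.K_mul_e v _ (fun b hb => hb) y hy
  cases n with
  | zero =>
    have hemp : IsEmpty Q.A := by
      refine ⟨fun a => ?_⟩
      have := hn 1 (fun _ => a) le_rfl (fun i hi => by omega)
      omega
    have := h.E_proj v
    rw [PDLE.zero_iff]
    refine Module.Projective.of_equiv (LinearEquiv.ofBijective g ⟨?_, hgs⟩)
    rw [injective_iff_map_eq_zero]
    rintro ⟨y, hy⟩ hy2
    have h1 := (hker y ((h.mem_E _ _).1 hy)).1 hy2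
    have h3 : x '' {a | Q.src a = v} = ∅ := by
      rw [Set.image_eq_empty]
      exact Set.eq_empty_of_isEmpty _
    rw [h3, Submodule.span_empty, Submodule.mem_bot] at h1
    exact Subtype.ext h1
  | succ n =>
    rw [PDLE.succ_iff (Submodule.inclusion hle) g (Submodule.inclusion_injective hle) hgs ?_
      (h.E_proj v)]
    · have h1 := h.pd_K n (Finset.univ.filter (fun a => Q.src a = v)) (fun a _ => by
        apply h.pd_arrow hQ
        intro m p hp _
        rcases Nat.eq_zero_or_pos m with h0 | h0
        · omega
        · exact hn m p h0 hp)
      have h2 : ((Finset.univ.filter (fun a => Q.src a = v) : Finset Q.A) : Set Q.A) =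
          {a | Q.src a = v} := by
        ext a; simp
      rw [h2] at h1
      exact h1
    · rintro ⟨y, hy⟩
      rw [hg, hker y ((h.mem_E _ _).1 hy)]
      constructor
      · intro hy2
        exact ⟨⟨y, hy2⟩, rfl⟩
      · rintro ⟨z, hz⟩
        have hz' : (z : B) = y := Subtype.ext_iff.1 hz
        rw [← hz']
        exact z.2

theorem Pres.pd_finiteLength (h : Pres k Q B e x) (hQ : IsGentle Q) (n : ℕ)
    (hn : ∀ (m : ℕ) (p : ℕ → Q.A), 1 ≤ m → IsForbiddenPath Q m p → m ≤ n)
    (M : Type) [AddCommGroup M] [Module B M] (hM : IsFiniteLength B M) : PDLE B n M := by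
  induction hM with
  | of_subsingleton => exact PDLE.of_projective _ inferInstance
  | @of_simple_quotient M _ _ N _ _ ih =>
    exact PDLE.middle N.subtype N.mkQ (Submodule.subtype_injective _)
      (Submodule.mkQ_surjective _) (LinearMap.exact_subtype_mkQ _) ih
      (h.pd_simple hQ n hn (M ⧸ N))

theorem Pres.pd_le (h : Pres k Q B e x) (hQ : IsGentle Q) (n : ℕ)
    (hn : ∀ (m : ℕ) (p : ℕ → Q.A), 1 ≤ m → IsForbiddenPath Q m p → m ≤ n)
    (M : Type) [AddCommGroup M] [Module B M] [Module.Finite B M] : PDLE B n M := by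
  have := h.finite hQ
  have : IsArtinianRing B := IsArtinianRing.of_finite k B
  have : IsNoetherianRing B := IsNoetherianRing.of_finite k B
  exact h.pd_finiteLength hQ n hn M
    (isFiniteLength_iff_isNoetherian_isArtinian.2 ⟨inferInstance, inferInstance⟩)

end UpperPart

section FinalPart

theorem gentle_pres (k : Type) [Field k] (Q : GentleData) :
    Pres k Q (GentleAlgebra k Q)ᵐᵒᵖ (fun v => op (idemOf k Q v)) (fun a => op (arrOf k Q a)) where
  idem v := by
    rw [← op_mul, idemOf, ofGen, ← map_mul]
    exact congrArg op (RingQuot.mkAlgHom_rel k (GentleRel.idem v))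
  orth v w hvw := by
    rw [← op_mul, idemOf, idemOf, ofGen, ofGen, ← map_mul,
      RingQuot.mkAlgHom_rel k (GentleRel.orth w v hvw.symm), map_zero, op_zero]
  sum := by
    rw [← Finset.op_sum]
    simp only [idemOf, ofGen]
    rw [← map_sum, RingQuot.mkAlgHom_rel k (GentleRel.sum_idem), map_one, op_one]
  tgt a := by
    rw [← op_mul, idemOf, arrOf, ofGen, ofGen, ← map_mul]
    exact congrArg op (RingQuot.mkAlgHom_rel k (GentleRel.mul_tgt a))
  src a := by
    rw [← op_mul, idemOf, arrOf, ofGen, ofGen, ← map_mul]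
    exact congrArg op (RingQuot.mkAlgHom_rel k (GentleRel.src_mul a))
  rel a b hab := by
    rw [← op_mul, arrOf, arrOf, ofGen, ofGen, ← map_mul,
      RingQuot.mkAlgHom_rel k (GentleRel.relation a b hab), map_zero, op_zero]
  gen T h1 hv ha y := by
    have key : ∀ z : FreeAlgebra k (GenSym Q), ∀ y ∈ T,
        op (RingQuot.mkAlgHom k (GentleRel k Q) z) * y ∈ T := by
      intro z
      induction z using FreeAlgebra.induction with
      | grade0 r =>
        intro y hy
        rw [AlgHom.commutes, ← MulOpposite.algebraMap_apply, ← Algebra.smul_def]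
        exact T.smul_mem r hy
      | grade1 g =>
        intro y hy
        cases g with
        | vertex v => exact hv v y hy
        | arrow a => exact ha a y hy
      | mul a b iha ihb =>
        intro y hy
        rw [map_mul, op_mul, mul_assoc]
        exact ihb _ (iha _ hy)
      | add a b iha ihb =>
        intro y hy
        rw [map_add, op_add, add_mul]
        exact add_mem (iha _ hy) (ihb _ hy)
    obtain ⟨z, hz⟩ := RingQuot.mkAlgHom_surjective k (GentleRel k Q) (unop y)
    have := key z 1 h1
    rwa [hz, mul_one, op_unop] at this
  lift C _ _ e' x' hid horth hsum htgt hsrc hrel := by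
    let F : FreeAlgebra k (GenSym Q) →ₐ[k] Cᵐᵒᵖ := FreeAlgebra.lift k (fun g => match g with
      | GenSym.vertex v => op (e' v)
      | GenSym.arrow a => op (x' a))
    have hFv : ∀ v, F (FreeAlgebra.ι k (GenSym.vertex v)) = op (e' v) := fun v => by
      simp [F]
    have hFa : ∀ a, F (FreeAlgebra.ι k (GenSym.arrow a)) = op (x' a) := fun a => by
      simp [F]
    have hF : ∀ ⦃y z⦄, GentleRel k Q y z → F y = F z := by
      intro y z hyz
      cases hyz with
      | idem v => rw [map_mul, hFv, ← op_mul, hid]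
      | orth v w hvw => rw [map_mul, hFv, hFv, ← op_mul, horth _ _ hvw.symm, map_zero, op_zero]
      | sum_idem => rw [map_sum, map_one]; simp only [hFv]; rw [← Finset.op_sum, hsum, op_one]
      | src_mul a => rw [map_mul, hFv, hFa, ← op_mul, hsrc]
      | mul_tgt a => rw [map_mul, hFv, hFa, ← op_mul, htgt]
      | relation a b hab => rw [map_mul, hFa, hFa, ← op_mul, hrel _ _ hab, map_zero, op_zero]
    let G : GentleAlgebra k Q →ₐ[k] Cᵐᵒᵖ := RingQuot.liftAlgHom k ⟨F, hF⟩
    have hG : ∀ z, G (RingQuot.mkAlgHom k (GentleRel k Q) z) = F z := fun z =>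
      RingQuot.liftAlgHom_mkAlgHom_apply k F hF z
    refine ⟨AlgHom.opComm G, fun v => ?_, fun a => ?_⟩
    · have : AlgHom.opComm G (op (idemOf k Q v)) = unop (G (idemOf k Q v)) := rfl
      rw [this, idemOf, ofGen, hG, hFv, unop_op]
    · have : AlgHom.opComm G (op (arrOf k Q a)) = unop (G (arrOf k Q a)) := rfl
      rw [this, arrOf, ofGen, hG, hFa, unop_op]

theorem cycle_of_repeat (Q : GentleData) (m : ℕ) (p : ℕ → Q.A) (hp : IsForbiddenPath Q m p)
    (i j : ℕ) (hij : i < j) (hj : j < m) (hpij : p i = p j) :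
    ∃ ℓ : ℕ, 1 ≤ ℓ ∧ ∃ c : ZMod ℓ → Q.A, IsOCFCycle Q c := by
  obtain ⟨l, rfl⟩ : ∃ l, j = i + (l + 1) := ⟨j - i - 1, by omega⟩
  refine ⟨l + 1, by omega, fun t => p (i + t.val), ?_⟩
  intro t
  have ht : t.val < l + 1 := ZMod.val_lt t
  have h1 := hp (i + t.val) (by omega)
  change Q.tgt (p (i + t.val)) = Q.src (p (i + (t+1).val)) ∧
    Q.rel (p (i + t.val)) (p (i + (t+1).val))
  by_cases htl : t.val = l
  · have h2 : t + 1 = 0 := by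
      rw [← ZMod.natCast_zmod_val t, htl]
      exact_mod_cast ZMod.natCast_self (l + 1)
    rw [h2, ZMod.val_zero, add_zero, hpij]
    rw [htl] at h1 ⊢
    exact h1
  · have h2 : (t + 1).val = t.val + 1 := by
      have h3 : t + 1 = ((t.val + 1 : ℕ) : ZMod (l + 1)) := by simp
      rw [h3, ZMod.val_natCast, Nat.mod_eq_of_lt (by omega)]
    rw [h2]
    exact h1

theorem exists_thread (Q : GentleData)
    (hc : ¬ ∃ ℓ : ℕ, 1 ≤ ℓ ∧ ∃ c : ZMod ℓ → Q.A, IsOCFCycle Q c)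
    (m : ℕ) (p : ℕ → Q.A) (hm : 1 ≤ m) (hp : IsForbiddenPath Q m p) :
    ∃ M, m ≤ M ∧ ∃ p', IsForbiddenThread Q M p' := by
  classical
  let P : ℕ → Prop := fun n => ∃ p, IsForbiddenPath Q n p
  have hbd : ∀ n, P n → n ≤ Fintype.card Q.A := by
    rintro n ⟨q, hq⟩
    have hinj : Function.Injective (fun i : Fin n => q i) := by
      intro i j hij
      by_contra hne
      apply hc
      rcases lt_or_gt_of_ne (fun h => hne (Fin.ext h)) with h | h
      · exact cycle_of_repeat Q n q hq i j h j.2 hij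
      · exact cycle_of_repeat Q n q hq j i h i.2 hij.symm
    simpa using Fintype.card_le_of_injective _ hinj
  obtain ⟨q, hq⟩ : P (Nat.findGreatest P (Fintype.card Q.A)) :=
    Nat.findGreatest_spec (hbd m ⟨p, hp⟩) ⟨p, hp⟩
  have hmM : m ≤ Nat.findGreatest P (Fintype.card Q.A) :=
    Nat.le_findGreatest (hbd m ⟨p, hp⟩) ⟨p, hp⟩
  have hmax : ∀ n, P n → n ≤ Nat.findGreatest P (Fintype.card Q.A) := fun n hn =>
    Nat.le_findGreatest (hbd n hn) hn
  generalize Nat.findGreatest P (Fintype.card Q.A) = M at hq hmM hmax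
  refine ⟨M, hmM, q, by omega, hq, ?_, ?_⟩
  · intro b hb hr
    have := hmax (M+1) ⟨fun | 0 => b | i+1 => q i, by
      rintro (_|i) hi
      · exact ⟨hb, hr⟩
      · exact hq i (by omega)⟩
    omega
  · intro b hb hr
    have := hmax (M+1) ⟨fun i => if i < M then q i else b, by
      intro i hi
      by_cases hiM : i + 1 < M
      · simp only [if_pos hiM, if_pos (show i < M by omega)]
        exact hq i hiM
      · have : i = M - 1 := by omega
        simp only [if_neg hiM, if_pos (show i < M by omega)]
        rw [this]
        exact ⟨hb.symm, hr⟩⟩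
    omega

theorem globalDim_ge (k : Type) [Field k] (Q : GentleData) (hQ : IsGentle Q)
    (m : ℕ) (p : ℕ → Q.A) (hp : IsForbiddenPath Q m p) :
    (m : ℕ∞) ≤ globalDim (GentleAlgebra k Q)ᵐᵒᵖ := by
  cases m with
  | zero => simp
  | succ m =>
    by_contra hlt
    rw [not_le] at hlt
    have h := gentle_pres k Q
    apply h.not_pd_quot hQ m p hp
    rw [← projDim_le_iff]
    have h1 : globalDim (GentleAlgebra k Q)ᵐᵒᵖ ≤ (m : ℕ∞) := by
      rw [Nat.cast_add, Nat.cast_one] at hlt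
      exact Order.le_of_lt_add_one hlt
    refine le_trans ?_ h1
    exact le_iSup₂_of_le (f := fun (M : ModuleCat.{0} (GentleAlgebra k Q)ᵐᵒᵖ)
      (_ : Module.Finite (GentleAlgebra k Q)ᵐᵒᵖ ↥M) => projDim (GentleAlgebra k Q)ᵐᵒᵖ ↥M)
      (ModuleCat.of _ ((GentleAlgebra k Q)ᵐᵒᵖ ⧸
        Submodule.span (GentleAlgebra k Q)ᵐᵒᵖ {op (arrOf k Q (p 0))}))
      (inferInstanceAs (Module.Finite _ ((GentleAlgebra k Q)ᵐᵒᵖ ⧸ _))) le_rfl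

end FinalPart

/-- The global dimension of a gentle algebra `A = kQ/I`
equals the maximum of the lengths of the forbidden threads of `A` (infinite
precisely when there is a forbidden thread of infinite length, i.e. an
oriented cycle with full relations). -/
theorem globalDim_eq_sup_forbidden_thread_lengths
    (k : Type) [Field k] [IsAlgClosed k] (Q : GentleData) (hQ : IsGentle Q) :
    globalDim (GentleAlgebra k Q)ᵐᵒᵖ = sSup (forbiddenThreadLengths Q) := by
  apply le_antisymm
  · by_cases hc : ∃ ℓ : ℕ, 1 ≤ ℓ ∧ ∃ c : ZMod ℓ → Q.A, IsOCFCycle Q c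
    · have : (⊤ : ℕ∞) ≤ sSup (forbiddenThreadLengths Q) := le_sSup (Or.inr ⟨rfl, hc⟩)
      exact le_trans le_top this
    · generalize hs : sSup (forbiddenThreadLengths Q) = s
      cases s with
      | top => exact le_top
      | coe n =>
        refine iSup₂_le (fun M hM => ?_)
        rw [projDim_le_iff]
        apply (gentle_pres k Q).pd_le hQ
        intro m p hm hp
        obtain ⟨M', hmM, p', hp'⟩ := exists_thread Q hc m p hm hp
        have h1 : (M' : ℕ∞) ≤ sSup (forbiddenThreadLengths Q) :=
          le_sSup (Or.inl (Or.inr ⟨M', rfl, p', hp'⟩))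
        rw [hs] at h1
        exact hmM.trans (by exact_mod_cast h1)
  · apply sSup_le
    rintro n ((⟨rfl, -⟩ | ⟨m, rfl, p, hp⟩) | ⟨rfl, ℓ, hℓ, c, hc⟩)
    · exact bot_le
    · exact globalDim_ge k Q hQ m p hp.2.1
    · rw [top_le_iff, ENat.eq_top_iff_forall_ge]
      intro m
      apply globalDim_ge k Q hQ m (fun i => c (i : ZMod ℓ))
      intro i _
      have := hc (i : ZMod ℓ)
      simpa using this
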